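/- Let n be a natural number, V a finite set, and h : Fin n → V a function. Then the number of ordered pairs (i,j) with i ≠ j that are consecutive collision pairs for h equals 2·(n − |h(Fin n)|), where |h(Fin n)| is the cardinality of the image of h. Equivalently, each fiber of h of cardinality ℓ ≥ 1 contributes exactly 2(ℓ − 1) ordered consecutive collision pairs. -/

import Mathlib

open Set

/-- `(i, j)` is a consecutive collision pair for `h`: `i ≠ j`, `h i = h j`, and
no index strictly between `i` and `j` has the same hash value. -/
def ConsecPair {n : ℕ} {V : Type*} (h : Fin n → V) (i j : Fin n) : Prop :=
  i ≠ j ∧ h i = h j ∧ ∀ a : Fin n, min i j < a → a < max i j → h a ≠ h i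

/-! In a fibre of `h` with the order induced from `Fin n`, the consecutive collision pairs are the
adjacent pairs of the Hasse diagram. A chain of `ℓ ≥ 1` elements has `ℓ - 1` covering pairs,
one starting at each element but the last, so a nonempty fibre contributes `2 * (ℓ - 1)` ordered
pairs; summing over the fibres gives `2 * (n - |range h|)`. -/

open SimpleGraph (hasse hasse_adj)

theorem ncard_eq_sum_ncard_fiberwise {α β : Type*} {s : Set α} (hs : s.Finite) {f : α → β}
    {t : Finset β} (hf : MapsTo f s t) :
    s.ncard = ∑ b ∈ t, {a | a ∈ s ∧ f a = b}.ncard := by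
  classical
  lift s to Finset α using hs
  rw [ncard_coe_finset, Finset.card_eq_sum_card_fiberwise hf]
  refine Finset.sum_congr rfl fun b _ => ?_
  rw [← ncard_coe_finset, Finset.coe_filter]
  rfl

section FiniteChain

variable (α : Type*) [LinearOrder α] [Finite α]

theorem ncard_setOf_not_isMax : {a : α | ¬IsMax a}.ncard = Nat.card α - 1 := by
  have := Fintype.ofFinite α
  cases isEmpty_or_nonempty α
  · simp
  · let : OrderTop α := Fintype.toOrderTop α
    have : {a : α | ¬IsMax a} = {⊤}ᶜ := by ext; simp
    rw [this, ncard_compl, ncard_singleton]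

theorem ncard_setOf_covBy : {p : α × α | p.1 ⋖ p.2}.ncard = Nat.card α - 1 := by
  let : SuccOrder α := .ofLinearWellFoundedLT α
  have graph_succ : {p : α × α | p.1 ⋖ p.2} =
      (fun a => (a, Order.succ a)) '' {a | ¬IsMax a} := by
    ext ⟨a, b⟩
    constructor
    · intro hab
      exact ⟨a, hab.lt.not_isMax, congrArg (Prod.mk a) hab.succ_eq⟩
    · rintro ⟨a, ha, ⟨⟩⟩
      exact Order.covBy_succ_of_not_isMax ha
  have succ_injective : Function.Injective fun a : α => (a, Order.succ a) :=
    fun _ _ hab => congrArg Prod.fst hab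
  rw [graph_succ, ncard_image_of_injective _ succ_injective, ncard_setOf_not_isMax]

theorem ncard_setOf_hasse_adj :
    {p : α × α | (hasse α).Adj p.1 p.2}.ncard = 2 * (Nat.card α - 1) := by
  have union_swap : {p : α × α | (hasse α).Adj p.1 p.2} =
      {p | p.1 ⋖ p.2} ∪ Prod.swap '' {p | p.1 ⋖ p.2} := by
    rw [image_swap_eq_preimage_swap]
    rfl
  have disjoint_swap :
      Disjoint {p : α × α | p.1 ⋖ p.2} (Prod.swap '' {p | p.1 ⋖ p.2}) := by
    rw [image_swap_eq_preimage_swap, disjoint_left]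
    exact fun p hp hp' => lt_asymm hp.lt hp'.lt
  rw [union_swap, ncard_union_eq disjoint_swap, ncard_image_of_injective _ Prod.swap_injective,
    ncard_setOf_covBy, two_mul]

end FiniteChain

namespace ConsecPair

variable {n : ℕ} {V : Type*} {h : Fin n → V} {v : V}

theorem symm {i j : Fin n} (hij : ConsecPair h i j) : ConsecPair h j i := by
  obtain ⟨hne, heq, hbetween⟩ := hij
  refine ⟨hne.symm, heq.symm, ?_⟩
  rwa [min_comm, max_comm, ← heq]

theorem fiber_covBy_iff {i j : {i // h i = v}} : i ⋖ j ↔ ConsecPair h i j ∧ i < j := by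
  constructor
  · intro hij
    refine ⟨⟨Subtype.coe_ne_coe.2 hij.lt.ne, i.2.trans j.2.symm, fun a hia haj ha => ?_⟩, hij.lt⟩
    rw [min_eq_left (Subtype.coe_le_coe.2 hij.le)] at hia
    rw [max_eq_right (Subtype.coe_le_coe.2 hij.le)] at haj
    exact hij.2 (c := ⟨a, ha.trans i.2⟩) hia haj
  · rintro ⟨⟨-, -, hbetween⟩, hlt⟩
    refine ⟨hlt, fun a hia haj => hbetween a ?_ ?_ (a.2.trans i.2.symm)⟩
    · exact (min_le_left _ _).trans_lt hia
    · exact haj.trans_le (le_max_right _ _)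

theorem fiber_hasse_adj_iff {i j : {i // h i = v}} : (hasse _).Adj i j ↔ ConsecPair h i j := by
  rw [hasse_adj, fiber_covBy_iff, fiber_covBy_iff]
  constructor
  · rintro (⟨hij, -⟩ | ⟨hji, -⟩)
    exacts [hij, hji.symm]
  · intro hij
    exact (Subtype.coe_ne_coe.1 hij.1).lt_or_gt.imp (⟨hij, ·⟩) (⟨hij.symm, ·⟩)

theorem setOf_fiber_eq_image_hasse_adj (h : Fin n → V) (v : V) :
    {p : Fin n × Fin n | ConsecPair h p.1 p.2 ∧ h p.1 = v} =
      Prod.map Subtype.val Subtype.val ''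
        {p : {i // h i = v} × {i // h i = v} | (hasse _).Adj p.1 p.2} := by
  ext ⟨i, j⟩
  constructor
  · rintro ⟨hij, hi⟩
    exact ⟨(⟨i, hi⟩, ⟨j, hij.2.1.symm.trans hi⟩), fiber_hasse_adj_iff.2 hij, rfl⟩
  · rintro ⟨⟨i, j⟩, hij, ⟨⟩⟩
    exact ⟨fiber_hasse_adj_iff.1 hij, i.2⟩

theorem ncard_fiber (h : Fin n → V) (v : V) :
    {p : Fin n × Fin n | ConsecPair h p.1 p.2 ∧ h p.1 = v}.ncard =
      2 * ({i | h i = v}.ncard - 1) := by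
  rw [setOf_fiber_eq_image_hasse_adj,
    ncard_image_of_injective _ (Subtype.val_injective.prodMap Subtype.val_injective),
    ncard_setOf_hasse_adj]
  rfl

theorem ncard_eq (h : Fin n → V) :
    {p : Fin n × Fin n | ConsecPair h p.1 p.2}.ncard = 2 * (n - (range h).ncard) := by
  let t := (finite_range h).toFinset
  have mem_t (i : Fin n) : h i ∈ t := by simp [t]
  have one_le_fiber : ∀ v ∈ t, 1 ≤ {i | h i = v}.ncard := by
    intro v hv
    obtain ⟨i, hi⟩ := (finite_range h).mem_toFinset.1 hv
    exact (ncard_pos (toFinite _)).2 ⟨i, hi⟩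
  have sum_fibers : ∑ v ∈ t, {i | h i = v}.ncard = n := by
    simpa using (ncard_eq_sum_ncard_fiberwise finite_univ fun i _ => mem_t i).symm
  calc {p : Fin n × Fin n | ConsecPair h p.1 p.2}.ncard
      = ∑ v ∈ t, {p : Fin n × Fin n | ConsecPair h p.1 p.2 ∧ h p.1 = v}.ncard :=
        ncard_eq_sum_ncard_fiberwise (toFinite _) fun p _ => mem_t p.1
    _ = 2 * ∑ v ∈ t, ({i | h i = v}.ncard - 1) := by
        simp only [ncard_fiber, Finset.mul_sum]
    _ = 2 * (n - t.card) := by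
        rw [Finset.sum_tsub_distrib t one_le_fiber, sum_fibers, Finset.card_eq_sum_ones]
    _ = 2 * (n - (range h).ncard) := by rw [ncard_eq_toFinset_card _ (finite_range h)]

end ConsecPair

theorem stmt3_general {n : ℕ} {V : Type*} (h : Fin n → V) :
    Set.ncard {p : Fin n × Fin n | ConsecPair h p.1 p.2} =
      2 * (n - Set.ncard (Set.range h)) ∧
    ∀ v : V, 1 ≤ Set.ncard {i : Fin n | h i = v} →
      Set.ncard {p : Fin n × Fin n | ConsecPair h p.1 p.2 ∧ h p.1 = v} =
        2 * (Set.ncard {i : Fin n | h i = v} - 1) :=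
  ⟨ConsecPair.ncard_eq h, fun v _ => ConsecPair.ncard_fiber h v⟩

theorem stmt3 {n : ℕ} {V : Type*} [Fintype V] (h : Fin n → V) :
    Set.ncard {p : Fin n × Fin n | ConsecPair h p.1 p.2} =
      2 * (n - Set.ncard (Set.range h)) ∧
    ∀ v : V, 1 ≤ Set.ncard {i : Fin n | h i = v} →
      Set.ncard {p : Fin n × Fin n | ConsecPair h p.1 p.2 ∧ h p.1 = v} =
        2 * (Set.ncard {i : Fin n | h i = v} - 1) :=
  stmt3_general h
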